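/- Let C be a regular Ord-category. Then so-morphisms are stable under comma objects: given a comma object square (f/g, π₁: f/g→X, π₂: f/g→Z) for morphisms f: X→Y and g: Z→Y, if g is an so-morphism then the projection π₁ is an so-morphism, and if f is an so-morphism then the projection π₂ is an so-morphism. -/

import Mathlib

open CategoryTheory

universe w v u

/-- An `Ord`-enrichment of a category: a preorder on each hom-set,
preserved by composition on both sides. -/
class OrdEnrichment (C : Type u) [Category.{v} C] : Type (max u v) where
  ord : ∀ {X Y : C}, (X ⟶ Y) → (X ⟶ Y) → Prop
  ord_refl : ∀ {X Y : C} (f : X ⟶ Y), ord f f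
  ord_trans : ∀ {X Y : C} {f g h : X ⟶ Y}, ord f g → ord g h → ord f h
  precomp_ord : ∀ {X Y Z : C} (e : X ⟶ Y) {f g : Y ⟶ Z}, ord f g → ord (e ≫ f) (e ≫ g)
  postcomp_ord : ∀ {X Y Z : C} {f g : X ⟶ Y} (h : Y ⟶ Z), ord f g → ord (f ≫ h) (g ≫ h)

/-- The preorder on hom-sets of an `Ord`-category. -/
def homLe {C : Type u} [Category.{v} C] [OrdEnrichment C] {X Y : C} (f g : X ⟶ Y) : Prop :=
  OrdEnrichment.ord f g

infixl:50 " ≼ " => homLe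

section

variable {C : Type u} [Category.{v} C] [OrdEnrichment C]

/-- A full (ff-) morphism. -/
def IsFF {X Y : C} (m : X ⟶ Y) : Prop :=
  ∀ {A : C} (a a' : A ⟶ X), (a ≫ m) ≼ (a' ≫ m) → a ≼ a'

/-- An ff-monomorphism: a full monomorphism. -/
def IsFFMono {X Y : C} (m : X ⟶ Y) : Prop := IsFF m ∧ Mono m

/-- An so-morphism: a morphism left orthogonal to every ff-monomorphism. -/
def IsSO {A B : C} (e : A ⟶ B) : Prop :=
  ∀ {X Y : C} (m : X ⟶ Y), IsFFMono m → ∀ (u : A ⟶ X) (v : B ⟶ Y),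
    u ≫ m = e ≫ v → ∃ d : B ⟶ X, e ≫ d = u ∧ d ≫ m = v

/-- The (strict) comma object square for the ordered pair `(f, g)`. -/
structure IsCommaSq {X Y Z : C} (f : X ⟶ Y) (g : Z ⟶ Y) (P : C)
    (π₁ : P ⟶ X) (π₂ : P ⟶ Z) : Prop where
  le : (π₁ ≫ f) ≼ (π₂ ≫ g)
  lift : ∀ {A : C} (α : A ⟶ X) (β : A ⟶ Z), (α ≫ f) ≼ (β ≫ g) →
    ∃! h : A ⟶ P, h ≫ π₁ = α ∧ h ≫ π₂ = β
  lift_ord : ∀ {A : C} {h h' : A ⟶ P}, (h ≫ π₁) ≼ (h' ≫ π₁) → (h ≫ π₂) ≼ (h' ≫ π₂) → h ≼ h'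

/-- A 2-pullback square (pullback with the `Ord`-enriched universal property). -/
structure Is2Pullback {X Y Z : C} (f : X ⟶ Z) (g : Y ⟶ Z) (P : C)
    (p : P ⟶ X) (q : P ⟶ Y) : Prop where
  comm : p ≫ f = q ≫ g
  lift : ∀ {A : C} (a : A ⟶ X) (b : A ⟶ Y), a ≫ f = b ≫ g →
    ∃! h : A ⟶ P, h ≫ p = a ∧ h ≫ q = b
  lift_ord : ∀ {A : C} {h h' : A ⟶ P}, (h ≫ p) ≼ (h' ≫ p) → (h ≫ q) ≼ (h' ≫ q) → h ≼ h'

/-- A binary 2-product. -/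
structure Is2Product (X Y : C) (P : C) (p : P ⟶ X) (q : P ⟶ Y) : Prop where
  lift : ∀ {A : C} (a : A ⟶ X) (b : A ⟶ Y), ∃! h : A ⟶ P, h ≫ p = a ∧ h ≫ q = b
  lift_ord : ∀ {A : C} {h h' : A ⟶ P}, (h ≫ p) ≼ (h' ≫ p) → (h ≫ q) ≼ (h' ≫ q) → h ≼ h'

/-- A 2-equalizer. -/
structure Is2Equalizer {X Y : C} (f g : X ⟶ Y) (E : C) (i : E ⟶ X) : Prop where
  comm : i ≫ f = i ≫ g
  lift : ∀ {A : C} (a : A ⟶ X), a ≫ f = a ≫ g → ∃! h : A ⟶ E, h ≫ i = a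
  lift_ord : ∀ {A : C} {h h' : A ⟶ E}, (h ≫ i) ≼ (h' ≫ i) → h ≼ h'

/-- A bicoinserter of a parallel pair. -/
structure IsBicoinserter {X A E : C} (a b : X ⟶ A) (e : A ⟶ E) : Prop where
  le : (a ≫ e) ≼ (b ≫ e)
  desc : ∀ {F : C} (f : A ⟶ F), (a ≫ f) ≼ (b ≫ f) →
    ∃ t : E ⟶ F, (e ≫ t) ≼ f ∧ f ≼ (e ≫ t)
  desc_ord : ∀ {F : C} {f f' : A ⟶ F} {t t' : E ⟶ F},
    (e ≫ t) ≼ f → f ≼ (e ≫ t) → (e ≫ t') ≼ f' → f' ≼ (e ≫ t') → f ≼ f' → t ≼ t'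

/-- A relation from `X` to `Y` in an `Ord`-category: a jointly ff-monomorphic span. -/
structure RelStr (X Y : C) : Type (max u v) where
  obj : C
  p : obj ⟶ X
  q : obj ⟶ Y
  jointly_ff : ∀ {A : C} (a a' : A ⟶ obj), (a ≫ p) ≼ (a' ≫ p) → (a ≫ q) ≼ (a' ≫ q) → a ≼ a'
  jointly_mono : ∀ {A : C} (a a' : A ⟶ obj), a ≫ p = a' ≫ p → a ≫ q = a' ≫ q → a = a'

/-- `(x, y) ∈_A R`. -/
def RelStr.Mem {X Y : C} (R : RelStr X Y) {A : C} (x : A ⟶ X) (y : A ⟶ Y) : Prop :=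
  ∃ h : A ⟶ R.obj, h ≫ R.p = x ∧ h ≫ R.q = y

/-- `R ⊆ S`: `R` factors through `S` (over `X × Y`). -/
def RelStr.Sub {X Y : C} (R S : RelStr X Y) : Prop :=
  ∃ φ : R.obj ⟶ S.obj, φ ≫ S.p = R.p ∧ φ ≫ S.q = R.q

/-- `R ≅ S`: mutual factorisation. -/
def RelStr.Iso {X Y : C} (R S : RelStr X Y) : Prop := R.Sub S ∧ S.Sub R

/-- The opposite relation `R°`. -/
def RelStr.op {X Y : C} (R : RelStr X Y) : RelStr Y X where
  obj := R.obj
  p := R.q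
  q := R.p
  jointly_ff := fun a a' h1 h2 => R.jointly_ff a a' h2 h1
  jointly_mono := fun a a' h1 h2 => R.jointly_mono a a' h2 h1

/-- A relation is an (order) ideal when it is closed under lowering the first
coordinate and raising the second coordinate. -/
def IsIdealRel {X Y : C} (R : RelStr X Y) : Prop :=
  ∀ {A : C} (x x' : A ⟶ X) (y y' : A ⟶ Y), x' ≼ x → R.Mem x y → y ≼ y' → R.Mem x' y'

/-- The relation `f_♯` given by the span `(1_X, f)`. -/
def sharpRel {X Y : C} (f : X ⟶ Y) : RelStr X Y where
  obj := X
  p := 𝟙 X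
  q := f
  jointly_ff := fun a a' h1 _ => by simpa using h1
  jointly_mono := fun a a' h1 _ => by simpa using h1

/-- The relation `f°`, the opposite of `f_♯`. -/
def cosharpRel {X Y : C} (f : X ⟶ Y) : RelStr Y X := (sharpRel f).op

/-- `M` is the meet (intersection) `R ∧ S` of two relations. -/
def IsMeetRel {X Y : C} (R S M : RelStr X Y) : Prop :=
  M.Sub R ∧ M.Sub S ∧
    ∀ {A : C} (x : A ⟶ X) (y : A ⟶ Y), R.Mem x y → S.Mem x y → M.Mem x y

/-- `T` is the composite `S ∘ R` of the relations `R : X ↬ Y` and `S : Y ↬ Z`,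
obtained via the (so-morphism, ff-monomorphism) factorisation of the span
given by the 2-pullback over the middle object. -/
def IsCompositeRel {X Y Z : C} (R : RelStr X Y) (S : RelStr Y Z) (T : RelStr X Z) : Prop :=
  ∃ (P : C) (p₁ : P ⟶ R.obj) (p₂ : P ⟶ S.obj) (e : P ⟶ T.obj),
    Is2Pullback R.q S.p P p₁ p₂ ∧ IsSO e ∧ e ≫ T.p = p₁ ≫ R.p ∧ e ≫ T.q = p₂ ≫ S.q

/-- `R` is the ideal `f_* = f / 1_Y : X ↬ Y`. -/
def IsStarRel {X Y : C} (f : X ⟶ Y) (R : RelStr X Y) : Prop :=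
  IsCommaSq f (𝟙 Y) R.obj R.p R.q

/-- `R` is the ideal `f^* = 1_Y / f : Y ↬ X`. -/
def IsCostarRel {X Y : C} (f : X ⟶ Y) (R : RelStr Y X) : Prop :=
  IsCommaSq (𝟙 Y) f R.obj R.p R.q

/-- `R` is the identity ideal `I_X = 1_X / 1_X`. -/
def IsIdRel (X : C) (R : RelStr X X) : Prop :=
  IsCommaSq (𝟙 X) (𝟙 X) R.obj R.p R.q

/-- `S` is the 2-pullback of the relation `R ↣ X × Y` along `f × g`. -/
def IsRelPullback {X Y U V : C} (R : RelStr X Y) (f : U ⟶ X) (g : V ⟶ Y)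
    (S : RelStr U V) : Prop :=
  ∃ h : S.obj ⟶ R.obj, h ≫ R.p = S.p ≫ f ∧ h ≫ R.q = S.q ≫ g ∧
    ∀ {A : C} (a : A ⟶ U) (b : A ⟶ V) (c : A ⟶ R.obj),
      c ≫ R.p = a ≫ f → c ≫ R.q = b ≫ g →
      ∃ d : A ⟶ S.obj, d ≫ S.p = a ∧ d ≫ S.q = b ∧ d ≫ h = c

/-- A binary 2-coproduct. -/
structure Is2Coproduct (X Y : C) (P : C) (i : X ⟶ P) (j : Y ⟶ P) : Prop where
  desc : ∀ {A : C} (a : X ⟶ A) (b : Y ⟶ A), ∃! h : P ⟶ A, i ≫ h = a ∧ j ≫ h = b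
  desc_ord : ∀ {A : C} {h h' : P ⟶ A}, (i ≫ h) ≼ (i ≫ h') → (j ≫ h) ≼ (j ≫ h') → h ≼ h'

/-- A ternary 2-coproduct. -/
structure Is3Coproduct (X Y Z : C) (P : C) (i : X ⟶ P) (j : Y ⟶ P) (k : Z ⟶ P) : Prop where
  desc : ∀ {A : C} (a : X ⟶ A) (b : Y ⟶ A) (c : Z ⟶ A),
    ∃! h : P ⟶ A, i ≫ h = a ∧ j ≫ h = b ∧ k ≫ h = c
  desc_ord : ∀ {A : C} {h h' : P ⟶ A},
    (i ≫ h) ≼ (i ≫ h') → (j ≫ h) ≼ (j ≫ h') → (k ≫ h) ≼ (k ≫ h') → h ≼ h'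

/-- Reflexivity of a relation on `X`: the diagonal factors through it. -/
def ReflexiveRel {X : C} (R : RelStr X X) : Prop := R.Mem (𝟙 X) (𝟙 X)

/-- Transitivity of a relation on `X`: `R ∘ R ⊆ R`. -/
def TransitiveRel {X : C} (R : RelStr X X) : Prop :=
  ∀ T : RelStr X X, IsCompositeRel R R T → T.Sub R

/-- A congruence: a reflexive and transitive ideal. -/
def IsCongruence {X : C} (R : RelStr X X) : Prop :=
  IsIdealRel R ∧ ReflexiveRel R ∧ TransitiveRel R

/-- An effective congruence: `R ≅ f^* ∘ f_*` for some morphism `f`. -/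
def EffectiveCongruence {X : C} (R : RelStr X X) : Prop :=
  ∃ (Y : C) (f : X ⟶ Y) (Fstar : RelStr X Y) (Fco : RelStr Y X) (T : RelStr X X),
    IsStarRel f Fstar ∧ IsCostarRel f Fco ∧ IsCompositeRel Fstar Fco T ∧ R.Iso T

/-- The `Ord`-enriched difunctionality property of a relation. -/
def OrdDifunctional {X Y : C} (D : RelStr X Y) : Prop :=
  ∀ {A : C} (x u u' : A ⟶ X) (y y' v : A ⟶ Y),
    D.Mem x y → y ≼ y' → D.Mem u y' → u ≼ u' → D.Mem u' v → D.Mem x v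

end

/-- A regular `Ord`-category: finite weighted limits, an
(so-morphism, ff-monomorphism) factorisation system, so-morphisms stable under
2-pullbacks, and every so-morphism the bicoinserter of its comma object projections. -/
structure IsRegularOrd (C : Type u) [Category.{v} C] [OrdEnrichment C] : Prop where
  hasTerminal : ∃ T : C, ∀ A : C, ∃ f : A ⟶ T, ∀ g : A ⟶ T, g = f
  has2Products : ∀ X Y : C, ∃ (P : C) (p : P ⟶ X) (q : P ⟶ Y), Is2Product X Y P p q
  has2Equalizers : ∀ {X Y : C} (f g : X ⟶ Y), ∃ (E : C) (i : E ⟶ X), Is2Equalizer f g E i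
  has2Pullbacks : ∀ {X Y Z : C} (f : X ⟶ Z) (g : Y ⟶ Z),
    ∃ (P : C) (p : P ⟶ X) (q : P ⟶ Y), Is2Pullback f g P p q
  hasCommaObjects : ∀ {X Y Z : C} (f : X ⟶ Y) (g : Z ⟶ Y),
    ∃ (P : C) (p : P ⟶ X) (q : P ⟶ Z), IsCommaSq f g P p q
  fact : ∀ {X Y : C} (f : X ⟶ Y), ∃ (I : C) (e : X ⟶ I) (m : I ⟶ Y),
    IsSO e ∧ IsFFMono m ∧ e ≫ m = f
  so_pullback_stable : ∀ {X Y Z P : C} (f : X ⟶ Z) (g : Y ⟶ Z) (p : P ⟶ X) (q : P ⟶ Y),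
    Is2Pullback f g P p q → IsSO g → IsSO p
  so_bicoinserter : ∀ {A B P : C} (e : A ⟶ B), IsSO e →
    ∀ (π₁ π₂ : P ⟶ A), IsCommaSq e e P π₁ π₂ → IsBicoinserter π₁ π₂ e

/-- An `Ord`-Mal'tsev category: every ideal is `Ord`-difunctional. -/
def IsOrdMaltsev (C : Type u) [Category.{v} C] [OrdEnrichment C] : Prop :=
  ∀ (X Y : C) (D : RelStr X Y), IsIdealRel D → OrdDifunctional D

/-- An `Ord`-W-Mal'tsev object: every ideal is `Ord`-difunctional with respect to
generalised elements with domain `Y`. -/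
def IsOrdWMaltsevObj {C : Type u} [Category.{v} C] [OrdEnrichment C] (Y : C) : Prop :=
  ∀ (X Z : C) (R : RelStr X Z), IsIdealRel R →
    ∀ (x u u' : Y ⟶ X) (z z' v : Y ⟶ Z),
      R.Mem x z → z ≼ z' → R.Mem u z' → u ≼ u' → R.Mem u' v → R.Mem x v

/-!
The comma object `f / g` is the 2-pullback of `g` along the second projection of `f / 1`. Hence
`π₁ : f / g ⟶ X` is a 2-pullback of `g` followed by the first projection of `f / 1`, which is split
by the section induced by `(1, f)`. The claim about `π₂` is the same one for the reversed preorder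
on the hom-sets.
-/

section

variable {C : Type u} [Category.{v} C]

/-- The dual `Ord`-enrichment, with the reversed preorder on each hom-set; it exchanges the comma
objects `f / g` and `g / f`. -/
abbrev OrdEnrichment.co (C : Type u) [Category.{v} C] [OrdEnrichment C] : OrdEnrichment C where
  ord f g := g ≼ f
  ord_refl := OrdEnrichment.ord_refl
  ord_trans hfg hgh := OrdEnrichment.ord_trans hgh hfg
  precomp_ord e _ _ hfg := OrdEnrichment.precomp_ord e hfg
  postcomp_ord h hfg := OrdEnrichment.postcomp_ord h hfg

variable [enrichment : OrdEnrichment C]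

theorem Is2Pullback.of_co {X Y Z P : C} {f : X ⟶ Z} {g : Y ⟶ Z} {p : P ⟶ X} {q : P ⟶ Y}
    (h : @Is2Pullback C _ (OrdEnrichment.co C) X Y Z f g P p q) : Is2Pullback f g P p q := by
  obtain ⟨comm, lift, lift_ord⟩ := h
  exact ⟨comm, lift, fun hp hq => lift_ord hp hq⟩

/-- The class `W` is stable under 2-pullbacks. This is weaker than Mathlib's
`MorphismProperty.IsStableUnderBaseChange`, which concerns all ordinary pullbacks. -/
def IsStableUnder2Pullback (W : MorphismProperty C) : Prop :=
  ∀ {X Y Z P : C} (f : X ⟶ Z) (g : Y ⟶ Z) (p : P ⟶ X) (q : P ⟶ Y),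
    Is2Pullback f g P p q → W g → W p

theorem IsStableUnder2Pullback.co {W : MorphismProperty C} (hW : IsStableUnder2Pullback W) :
    @IsStableUnder2Pullback C _ (OrdEnrichment.co C) W := by
  intro X Y Z P f g p q h
  exact hW f g p q (.of_co h)

namespace IsCommaSq

variable {X Y Z P : C} {f : X ⟶ Y} {g : Z ⟶ Y} {π₁ : P ⟶ X} {π₂ : P ⟶ Z}

theorem co (hP : IsCommaSq f g P π₁ π₂) :
    @IsCommaSq C _ (OrdEnrichment.co C) Z Y X g f P π₂ π₁ := by
  obtain ⟨le, lift, lift_ord⟩ := hP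
  let _ := OrdEnrichment.co C
  refine ⟨le, fun α β h => ?_, fun h₂ h₁ => lift_ord h₁ h₂⟩
  simpa only [and_comm] using lift β α h

theorem hom_ext (hP : IsCommaSq f g P π₁ π₂) {A : C} {h h' : A ⟶ P}
    (h₁ : h ≫ π₁ = h' ≫ π₁) (h₂ : h ≫ π₂ = h' ≫ π₂) : h = h' := by
  have hle : ((h' ≫ π₁) ≫ f) ≼ ((h' ≫ π₂) ≫ g) := by
    simp only [Category.assoc]
    exact OrdEnrichment.precomp_ord h' hP.le
  exact (hP.lift _ _ hle).unique ⟨h₁, h₂⟩ ⟨rfl, rfl⟩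

theorem isSplitEpi_fst (hP : IsCommaSq f g P π₁ π₂) {s : X ⟶ Z} (hs : f ≼ (s ≫ g)) :
    IsSplitEpi π₁ := by
  obtain ⟨t, ⟨ht, -⟩, -⟩ := hP.lift (𝟙 X) s (by rwa [Category.id_comp])
  exact ⟨⟨⟨t, ht⟩⟩⟩

theorem is2Pullback_of_comp {V Q : C} {h : V ⟶ Y} {k : Z ⟶ V} {q₁ : Q ⟶ X} {q₂ : Q ⟶ V}
    (hP : IsCommaSq f (k ≫ h) P π₁ π₂) (hQ : IsCommaSq f h Q q₁ q₂) {r : P ⟶ Q}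
    (hr₁ : r ≫ q₁ = π₁) (hr₂ : r ≫ q₂ = π₂ ≫ k) : Is2Pullback q₂ k P r π₂ where
  comm := hr₂
  lift {A} a b hab := by
    have hle : ((a ≫ q₁) ≫ f) ≼ (b ≫ k ≫ h) := by
      rw [← reassoc_of% hab, Category.assoc]
      exact OrdEnrichment.precomp_ord a hQ.le
    obtain ⟨c, ⟨hc₁, hc₂⟩, hc_unique⟩ := hP.lift (a ≫ q₁) b hle
    have hcr : c ≫ r = a := hQ.hom_ext
      (by rw [Category.assoc, hr₁, hc₁])
      (by rw [Category.assoc, hr₂, reassoc_of% hc₂, hab])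
    refine ⟨c, ⟨hcr, hc₂⟩, fun d ⟨hdr, hd₂⟩ => hc_unique d ⟨?_, hd₂⟩⟩
    rw [← hdr, Category.assoc, hr₁]
  lift_ord {A d d'} hr h₂ := by
    refine hP.lift_ord ?_ h₂
    simp only [← hr₁, ← Category.assoc]
    exact OrdEnrichment.postcomp_ord q₁ hr

variable {W : MorphismProperty C} [W.IsStableUnderComposition]

theorem property_fst (hsplit : ∀ {A B : C} (e : A ⟶ B) [IsSplitEpi e], W e)
    (hpb : IsStableUnder2Pullback W) (hP : IsCommaSq f g P π₁ π₂)
    (hfid : ∃ (Q : C) (q₁ : Q ⟶ X) (q₂ : Q ⟶ Y), IsCommaSq f (𝟙 Y) Q q₁ q₂) (hg : W g) :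
    W π₁ := by
  obtain ⟨Q, q₁, q₂, hQ⟩ := hfid
  have hP' : IsCommaSq f (g ≫ 𝟙 Y) P π₁ π₂ := by rwa [Category.comp_id]
  obtain ⟨r, ⟨hr₁, hr₂⟩, -⟩ := hQ.lift π₁ (π₂ ≫ g) (by simpa only [Category.assoc] using hP'.le)
  have hr : W r := hpb _ _ _ _ (hP'.is2Pullback_of_comp hQ hr₁ hr₂) hg
  have : IsSplitEpi q₁ := hQ.isSplitEpi_fst (s := f) (by
    rw [Category.comp_id]
    exact OrdEnrichment.ord_refl f)
  exact hr₁ ▸ W.comp_mem r q₁ hr (hsplit q₁)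

theorem property_snd (hsplit : ∀ {A B : C} (e : A ⟶ B) [IsSplitEpi e], W e)
    (hpb : IsStableUnder2Pullback W) (hP : IsCommaSq f g P π₁ π₂)
    (hidg : ∃ (Q : C) (q₁ : Q ⟶ Y) (q₂ : Q ⟶ Z), IsCommaSq (𝟙 Y) g Q q₁ q₂) (hf : W f) :
    W π₂ := by
  obtain ⟨Q, q₁, q₂, hQ⟩ := hidg
  exact property_fst (enrichment := .co C) hsplit hpb.co hP.co ⟨Q, q₂, q₁, hQ.co⟩ hf

end IsCommaSq

variable (C)

/-- The class of ff-monomorphisms, whose left lifting property defines so-morphisms. -/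
def ffMonomorphisms : MorphismProperty C := fun _ _ m => IsFFMono m

/-- The class of so-morphisms, as a `MorphismProperty`. -/
def soMorphisms : MorphismProperty C := fun _ _ e => IsSO e

theorem soMorphisms_eq_llp : soMorphisms C = (ffMonomorphisms C).llp := by
  ext A B e
  refine ⟨fun he X Y m hm => ⟨fun {u v} sq => ?_⟩, fun he X Y m hm u v huv => ?_⟩
  · obtain ⟨d, hd₁, hd₂⟩ := he m hm u v sq.w
    exact ⟨⟨⟨d, hd₁, hd₂⟩⟩⟩
  · have := he m hm
    have sq : CommSq u e m v := ⟨huv⟩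
    exact ⟨sq.lift, sq.fac_left, sq.fac_right⟩

instance : (soMorphisms C).IsStableUnderComposition := by
  rw [soMorphisms_eq_llp]
  infer_instance

variable {C}

theorem isSO_of_strongEpi {A B : C} (e : A ⟶ B) [StrongEpi e] : IsSO e := by
  change soMorphisms C e
  rw [soMorphisms_eq_llp]
  intro X Y m hm
  have : Mono m := hm.2
  infer_instance

end

theorem statement1_general {C : Type u} [Category.{v} C] [OrdEnrichment C]
    {W : MorphismProperty C} [W.IsStableUnderComposition]
    (hsplit : ∀ {A B : C} (e : A ⟶ B) [IsSplitEpi e], W e) (hpb : IsStableUnder2Pullback W)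
    {X Y Z P : C} (f : X ⟶ Y) (g : Z ⟶ Y) (π₁ : P ⟶ X) (π₂ : P ⟶ Z)
    (hcomma : IsCommaSq f g P π₁ π₂)
    (hfid : ∃ (Q : C) (q₁ : Q ⟶ X) (q₂ : Q ⟶ Y), IsCommaSq f (𝟙 Y) Q q₁ q₂)
    (hidg : ∃ (Q : C) (q₁ : Q ⟶ Y) (q₂ : Q ⟶ Z), IsCommaSq (𝟙 Y) g Q q₁ q₂) :
    (W g → W π₁) ∧ (W f → W π₂) :=
  ⟨hcomma.property_fst hsplit hpb hfid, hcomma.property_snd hsplit hpb hidg⟩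

/-- In a regular `Ord`-category, so-morphisms are stable under comma objects. -/
theorem statement1 {C : Type u} [Category.{v} C] [OrdEnrichment C] (hC : IsRegularOrd C)
    {X Y Z P : C} (f : X ⟶ Y) (g : Z ⟶ Y) (π₁ : P ⟶ X) (π₂ : P ⟶ Z)
    (hcomma : IsCommaSq f g P π₁ π₂) :
    (IsSO g → IsSO π₁) ∧ (IsSO f → IsSO π₂) :=
  statement1_general (W := soMorphisms C) (fun e _ => isSO_of_strongEpi e) hC.so_pullback_stable
    f g π₁ π₂ hcomma (hC.hasCommaObjects f (𝟙 Y)) (hC.hasCommaObjects (𝟙 Y) g)
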